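/- Let I be an instance of {0,1} d-dimensional vector bin packing with bin size B ∈ ℤ⁺, let p denote the maximum, over coordinates r ∈ {1,…,d}, of the number of indices i with vᵢ(r) = 1, and assume p ≥ 2. If the first-fit packing places vector vᵢ into bin j (i.e., f(i) = j), then the number of coordinates of vᵢ equal to 1 is at least B(j−1)/(p−1). -/

import Mathlib

/-!
Suppose first-fit puts `v i` into bin `j`. Each earlier bin `k ∈ {1, …, j - 1}` rejected `v i`
because of some coordinate `r`. Loads never exceed `B` (`load_le`), so `v i r = 1` and the load of
bin `k` in coordinate `r` is exactly `B` (`exists_full_coord`). Let `R` be the set of coordinates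
where `v i` is `1`. Summing the loads in coordinates `R` over the bins `1, …, j - 1` gives at least
`B * (j - 1)`; on the other hand every coordinate in `R` is `1` for at most `p - 1` vectors other
than `v i`, so the same sum is at most `|R| * (p - 1)`.
-/

/-- First-fit assignment for {0,1} d-dimensional vector bin packing with bin size B:
`firstFit d B v i` is the least positive bin index `j` such that adding `v i` to the
vectors among `v 0, …, v (i-1)` already assigned to bin `j` keeps every coordinate sum `≤ B`. -/
noncomputable def firstFit (d B : ℕ) (v : ℕ → Fin d → ℕ) : ℕ → ℕ
  | i => sInf {j | 1 ≤ j ∧ ∀ r : Fin d,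
      (∑ i' ∈ (Finset.range i).attach,
        if firstFit d B v i'.1 = j then v i'.1 r else 0) + v i r ≤ B}
termination_by i => i
decreasing_by exact Finset.mem_range.mp i'.2

/-- Number of bins used by first-fit on the instance `v 0, …, v (n-1)`. -/
noncomputable def ffBins (d B n : ℕ) (v : ℕ → Fin d → ℕ) : ℕ :=
  Finset.sup (Finset.range n) (firstFit d B v)

/-- Optimal number of bins: the least `m` such that `{0,…,n-1}` can be partitioned into
`m` bins (fibers of `f`), each with every coordinate sum `≤ B`. -/
noncomputable def vbpOPT (d B n : ℕ) (v : ℕ → Fin d → ℕ) : ℕ :=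
  sInf {m | ∃ f : ℕ → ℕ, (∀ i < n, f i < m) ∧
    ∀ j, ∀ r : Fin d, (∑ i ∈ Finset.range n, if f i = j then v i r else 0) ≤ B}

/-- `maxRowCount d n v` is the maximum, over coordinates `r`, of the number of
indices `i < n` with `v i r = 1`. -/
def maxRowCount (d n : ℕ) (v : ℕ → Fin d → ℕ) : ℕ :=
  Finset.sup Finset.univ (fun r : Fin d => ((Finset.range n).filter (fun i => v i r = 1)).card)

/-- The load of bin `k` in coordinate `r` after first-fit has placed `v 0, …, v (m - 1)`. -/
noncomputable def load (d B : ℕ) (v : ℕ → Fin d → ℕ) (m k : ℕ) (r : Fin d) : ℕ :=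
  ∑ i' ∈ Finset.range m, if firstFit d B v i' = k then v i' r else 0

theorem firstFit_eq (d B : ℕ) (v : ℕ → Fin d → ℕ) (i : ℕ) :
    firstFit d B v i = sInf {j | 1 ≤ j ∧ ∀ r : Fin d, load d B v i j r + v i r ≤ B} := by
  rw [firstFit]
  congr 1
  ext j
  simp only [load, Set.mem_ofPred_eq]
  refine and_congr_right fun _ => forall_congr' fun r => ?_
  rw [Finset.sum_attach (Finset.range i) (fun i' => if firstFit d B v i' = j then v i' r else 0)]

/-- The set whose infimum defines `firstFit` is nonempty (a fresh bin always fits), so the chosen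
bin really is feasible. -/
theorem firstFit_spec (d B : ℕ) (hB : 1 ≤ B) (v : ℕ → Fin d → ℕ)
    (hv : ∀ i, ∀ r : Fin d, v i r ≤ 1) (i : ℕ) (r : Fin d) :
    load d B v i (firstFit d B v i) r + v i r ≤ B := by
  have hne : {j | 1 ≤ j ∧ ∀ r : Fin d, load d B v i j r + v i r ≤ B}.Nonempty := by
    refine ⟨Finset.sup (Finset.range i) (firstFit d B v) + 1, by omega, fun r => ?_⟩
    have h0 : load d B v i (Finset.sup (Finset.range i) (firstFit d B v) + 1) r = 0 := by
      refine Finset.sum_eq_zero fun i' hi' => if_neg ?_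
      have := Finset.le_sup (f := firstFit d B v) hi'
      omega
    have := hv i r
    omega
  have h := Nat.sInf_mem hne
  rw [← firstFit_eq] at h
  exact h.2 r

theorem load_le (d B : ℕ) (hB : 1 ≤ B) (v : ℕ → Fin d → ℕ)
    (hv : ∀ i, ∀ r : Fin d, v i r ≤ 1) (m k : ℕ) (r : Fin d) : load d B v m k r ≤ B := by
  induction m with
  | zero => simp [load]
  | succ m ih =>
    have hs : load d B v (m + 1) k r
        = load d B v m k r + if firstFit d B v m = k then v m r else 0 :=
      Finset.sum_range_succ _ _
    rw [hs]
    split_ifs with h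
    · rw [← h]
      exact firstFit_spec d B hB v hv m r
    · simpa using ih

/-- Every bin before the one receiving `v i` is full in some coordinate where `v i` is `1`. -/
theorem exists_full_coord (d B : ℕ) (hB : 1 ≤ B) (v : ℕ → Fin d → ℕ)
    (hv : ∀ i, ∀ r : Fin d, v i r ≤ 1) (i k : ℕ) (hk : 1 ≤ k) (hki : k < firstFit d B v i) :
    ∃ r : Fin d, v i r = 1 ∧ B ≤ load d B v i k r := by
  rw [firstFit_eq] at hki
  have h := Nat.notMem_of_lt_sInf hki
  simp only [Set.mem_ofPred_eq, not_and, not_forall] at h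
  obtain ⟨r, hr⟩ := h hk
  have h1 := hv i r
  have h2 := load_le d B hB v hv i k r
  exact ⟨r, by omega, by omega⟩

/-- In a coordinate where `v i` is `1`, the vectors before `v i` contribute at most `p - 1`. -/
theorem sum_prefix_le (d n : ℕ) (v : ℕ → Fin d → ℕ) (hv : ∀ i, ∀ r : Fin d, v i r ≤ 1)
    (i : ℕ) (hi : i < n) (r : Fin d) (hr : v i r = 1) :
    ∑ i' ∈ Finset.range i, v i' r ≤ maxRowCount d n v - 1 := by
  have h1 : ((Finset.range n).filter (fun i' => v i' r = 1)).card ≤ maxRowCount d n v :=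
    Finset.le_sup (f := fun r : Fin d => ((Finset.range n).filter (fun i => v i r = 1)).card)
      (Finset.mem_univ r)
  have h2 : ((Finset.range n).filter (fun i' => v i' r = 1)).card
      = ∑ i' ∈ Finset.range n, v i' r := by
    rw [Finset.card_filter]
    refine Finset.sum_congr rfl fun i' _ => ?_
    have := hv i' r
    split_ifs <;> omega
  have h3 : ∑ i' ∈ Finset.range (i + 1), v i' r ≤ ∑ i' ∈ Finset.range n, v i' r :=
    Finset.sum_le_sum_of_subset (Finset.range_mono hi)
  rw [Finset.sum_range_succ, hr] at h3
  omega

theorem mul_le_card_mul (d B n : ℕ) (hB : 1 ≤ B) (v : ℕ → Fin d → ℕ)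
    (hv : ∀ i, ∀ r : Fin d, v i r ≤ 1) (i : ℕ) (hi : i < n) :
    B * (firstFit d B v i - 1)
      ≤ (Finset.univ.filter (fun r : Fin d => v i r = 1)).card * (maxRowCount d n v - 1) := by
  set R := Finset.univ.filter (fun r : Fin d => v i r = 1) with hR
  set K := Finset.Ico 1 (firstFit d B v i) with hK
  calc B * (firstFit d B v i - 1) = ∑ _k ∈ K, B := by simp [hK, mul_comm]
    _ ≤ ∑ k ∈ K, ∑ r ∈ R, load d B v i k r := by
        refine Finset.sum_le_sum fun k hk => ?_
        obtain ⟨hk1, hk2⟩ := Finset.mem_Ico.mp hk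
        obtain ⟨r, hr, hl⟩ := exists_full_coord d B hB v hv i k hk1 hk2
        exact hl.trans (Finset.single_le_sum (f := fun r => load d B v i k r)
          (fun _ _ => Nat.zero_le _) (by simp [hR, hr]))
    _ = ∑ r ∈ R, ∑ i' ∈ Finset.range i, ∑ k ∈ K,
          if firstFit d B v i' = k then v i' r else 0 := by
        rw [Finset.sum_comm]
        exact Finset.sum_congr rfl fun r _ => Finset.sum_comm
    _ ≤ ∑ r ∈ R, ∑ i' ∈ Finset.range i, v i' r := by
        refine Finset.sum_le_sum fun r _ => Finset.sum_le_sum fun i' _ => ?_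
        rw [Finset.sum_ite_eq]
        split_ifs <;> simp
    _ ≤ ∑ _r ∈ R, (maxRowCount d n v - 1) :=
        Finset.sum_le_sum fun r hr =>
          sum_prefix_le d n v hv i hi r (Finset.mem_filter.mp hr).2
    _ = R.card * (maxRowCount d n v - 1) := by simp

/-- If first-fit places vector `v i` into bin `j`, then `v i` has at least
`B(j-1)/(p-1)` coordinates equal to 1, where `p ≥ 2` is the maximum row count. -/
theorem firstFit_ones_lower_bound (d B n : ℕ) (hd : 1 ≤ d) (hB : 1 ≤ B)
    (v : ℕ → Fin d → ℕ) (hv : ∀ i, ∀ r : Fin d, v i r ≤ 1)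
    (hp : 2 ≤ maxRowCount d n v)
    (i j : ℕ) (hi : i < n) (hij : firstFit d B v i = j) :
    (B : ℝ) * ((j : ℝ) - 1) / ((maxRowCount d n v : ℝ) - 1)
      ≤ ((Finset.univ.filter (fun r : Fin d => v i r = 1)).card : ℝ) := by
  have h := mul_le_card_mul d B n hB v hv i hi
  rw [hij] at h
  have hp' : (2 : ℝ) ≤ (maxRowCount d n v : ℝ) := by exact_mod_cast hp
  rw [div_le_iff₀ (by linarith)]
  have hR : (B : ℝ) * ((j - 1 : ℕ) : ℝ)
      ≤ ((Finset.univ.filter (fun r : Fin d => v i r = 1)).card : ℝ)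
        * ((maxRowCount d n v - 1 : ℕ) : ℝ) := by exact_mod_cast h
  rw [Nat.cast_sub (by omega : 1 ≤ maxRowCount d n v), Nat.cast_one] at hR
  -- Only `≤` is needed here, so the truncated case `j = 0` requires no separate treatment.
  have hj : (j : ℝ) - 1 ≤ ((j - 1 : ℕ) : ℝ) := by
    have : j ≤ (j - 1) + 1 := by omega
    have : (j : ℝ) ≤ ((j - 1 : ℕ) : ℝ) + 1 := by exact_mod_cast this
    linarith
  exact (mul_le_mul_of_nonneg_left hj (Nat.cast_nonneg B)).trans hR
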